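/- Let sfp(σ) denote the number of strong fixed points of σ, and let B(t,u) = Σ_{n≥0} t^n Σ_{σ∈K_n, σ_1≠1} u^{sfp(σ)}, the distribution of strong fixed points over king permutations of length n that do not begin with the value 1 (the empty permutation contributes 1). Then (1 + t(1+u+ut) + t(1−u)·A(t))·B(t,u) = (1+t)·A(t), where A(t) is regarded as an element of ℚ[u][[t]] via the constant-polynomial embedding. -/

import Mathlib

/-- A permutation of `{0, …, n-1}` is a *king permutation* if consecutive entries
differ by more than 1 in absolute value. -/
def IsKing {n : ℕ} (σ : Equiv.Perm (Fin n)) : Prop :=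
  ∀ i : Fin n, ∀ h : (i : ℕ) + 1 < n,
    1 < |((σ ⟨(i : ℕ) + 1, h⟩ : ℕ) : ℤ) - ((σ i : ℕ) : ℤ)|

/-- `kingCount n = A_n`, the number of king permutations of length `n`. -/
noncomputable def kingCount (n : ℕ) : ℕ :=
  Nat.card {σ : Equiv.Perm (Fin n) // IsKing σ}

/-- `A(t)` regarded as a power series over `ℚ[u]` (constant-polynomial coefficients). -/
noncomputable def kingAu : PowerSeries (Polynomial ℚ) :=
  PowerSeries.mk fun n => (kingCount n : Polynomial ℚ)

/-- `i` is a *strong fixed point* of `σ`: all earlier entries are smaller and all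
later entries are larger. -/
def IsStrongFixedPoint {n : ℕ} (σ : Equiv.Perm (Fin n)) (i : Fin n) : Prop :=
  (∀ j : Fin n, j < i → σ j < σ i) ∧ (∀ j : Fin n, i < j → σ i < σ j)

/-- `sfp σ`, the number of strong fixed points of `σ`. -/
noncomputable def sfp {n : ℕ} (σ : Equiv.Perm (Fin n)) : ℕ :=
  Nat.card {i : Fin n // IsStrongFixedPoint σ i}

-- `B(t,u) = Σ_{n≥0} t^n Σ_{σ∈K_n, σ_1≠1} u^{sfp(σ)}`: the distribution of strong
-- fixed points over king permutations not beginning with the smallest value.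
open Classical in
noncomputable def Btu : PowerSeries (Polynomial ℚ) :=
  PowerSeries.mk fun n =>
    ∑ σ : Equiv.Perm (Fin n),
      if IsKing σ ∧ (∀ h : 0 < n, σ ⟨0, h⟩ ≠ ⟨0, h⟩) then
        (Polynomial.X : Polynomial ℚ) ^ sfp σ
      else 0

/-- `u` viewed as a constant power series over `ℚ[u]`. -/
noncomputable def U : PowerSeries (Polynomial ℚ) :=
  PowerSeries.C (R := Polynomial ℚ) Polynomial.X

/-!
A king permutation `σ` with a marked strong fixed point `i` is a direct sum `α ⊕ 1 ⊕ β`, where `α`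
is king and does not end with its maximum, `β` is king and does not begin with its minimum, and the
strong fixed points of `σ` to the right of `i` are those of `β`. Expanding
`u ^ sfp σ - 1 = (u - 1) * (1 + u + ⋯ + u ^ (sfp σ - 1))`, with one term for each marked `i`, gives
`G - A = t (u - 1) D B`, where `G` is the distribution of `sfp` over all king permutations and `D`
counts the possible `α`. Marking a strong fixed point in last or first position gives in the same
way `A = (1 + t) D` and `G = (1 + u t) B`; eliminating `D` and `G` proves the theorem.
-/

open Finset hiding mk

section DirectSum

variable {a b : ℕ}

/-- The direct sum of two permutations in one-line notation: `β`, with positions and values shifted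
by `a`, is placed after `α`. -/
def directSumPerm (α : Equiv.Perm (Fin a)) (β : Equiv.Perm (Fin b)) : Equiv.Perm (Fin (a + b)) :=
  finSumFinEquiv.permCongr (Equiv.Perm.sumCongr α β)

infixl:65 " ⊕ₚ " => directSumPerm

@[simp]
theorem directSumPerm_castAdd (α : Equiv.Perm (Fin a)) (β : Equiv.Perm (Fin b)) (i : Fin a) :
    (α ⊕ₚ β) (Fin.castAdd b i) = Fin.castAdd b (α i) := by
  simp [directSumPerm]

@[simp]
theorem directSumPerm_natAdd (α : Equiv.Perm (Fin a)) (β : Equiv.Perm (Fin b)) (i : Fin b) :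
    (α ⊕ₚ β) (Fin.natAdd a i) = Fin.natAdd a (β i) := by
  simp [directSumPerm]

theorem directSumPerm_injective2 :
    Function.Injective2 (directSumPerm : Equiv.Perm (Fin a) → Equiv.Perm (Fin b) → _) :=
  fun _ _ _ _ h => Prod.mk.inj <|
    Equiv.Perm.sumCongrHom_injective (finSumFinEquiv.permCongr.injective h)

theorem exists_directSumPerm_eq (σ : Equiv.Perm (Fin (a + b)))
    (h : ∀ i : Fin a, (σ (Fin.castAdd b i) : ℕ) < a) : ∃ α β, α ⊕ₚ β = σ := by
  have hmaps : Set.MapsTo (finSumFinEquiv.symm.permCongr σ)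
      (Set.range Sum.inl) (Set.range Sum.inl) := by
    rintro _ ⟨i, rfl⟩
    refine ⟨⟨_, h i⟩, ?_⟩
    rw [Equiv.permCongr_apply, Equiv.eq_symm_apply]
    ext
    simp
  obtain ⟨⟨α, β⟩, hαβ⟩ := Equiv.Perm.mem_sumCongrHom_range_of_perm_mapsTo_inl hmaps
  exact ⟨α, β, (Equiv.eq_symm_apply finSumFinEquiv.permCongr).1 hαβ⟩

end DirectSum

section StrongFixedPoint

variable {n : ℕ} {σ : Equiv.Perm (Fin n)} {i : Fin n}

theorem IsStrongFixedPoint.apply_eq (h : IsStrongFixedPoint σ i) : σ i = i := by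
  have hlt : #(Iio i) ≤ #(Iio (σ i)) :=
    card_le_card_of_injOn σ (fun j hj => by simpa using h.1 j (by simpa using hj))
      σ.injective.injOn
  have hgt : #(Ioi i) ≤ #(Ioi (σ i)) :=
    card_le_card_of_injOn σ (fun j hj => by simpa using h.2 j (by simpa using hj))
      σ.injective.injOn
  rw [Fin.card_Iio, Fin.card_Iio] at hlt
  rw [Fin.card_Ioi, Fin.card_Ioi] at hgt
  omega

/-- The permutation begins with its smallest value; false for the empty permutation. -/
def FixesFirst (σ : Equiv.Perm (Fin n)) : Prop := ∃ i : Fin n, (i : ℕ) = 0 ∧ σ i = i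

theorem fixesFirst_iff : FixesFirst σ ↔ ∃ h : 0 < n, σ ⟨0, h⟩ = ⟨0, h⟩ :=
  ⟨fun ⟨⟨_, h⟩, hi, hσ⟩ => by subst hi; exact ⟨h, hσ⟩, fun ⟨_, hσ⟩ => ⟨_, rfl, hσ⟩⟩

/-- The permutation ends with its largest value; false for the empty permutation. -/
def FixesLast (σ : Equiv.Perm (Fin n)) : Prop := ∃ i : Fin n, (i : ℕ) + 1 = n ∧ σ i = i

theorem isStrongFixedPoint_zero_iff {σ : Equiv.Perm (Fin (n + 1))} :
    IsStrongFixedPoint σ 0 ↔ FixesFirst σ := by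
  refine ⟨fun h => ⟨0, rfl, h.apply_eq⟩, ?_⟩
  rintro ⟨i, hi, h⟩
  obtain rfl : i = 0 := Fin.ext hi
  refine ⟨fun j hj => absurd hj (Fin.not_lt_zero j), fun j hj => ?_⟩
  rw [h, Fin.pos_iff_ne_zero]
  exact fun hj' => hj.ne' (σ.injective (hj'.trans h.symm))

theorem isStrongFixedPoint_last_iff {σ : Equiv.Perm (Fin (n + 1))} :
    IsStrongFixedPoint σ (Fin.last n) ↔ FixesLast σ := by
  refine ⟨fun h => ⟨_, rfl, h.apply_eq⟩, ?_⟩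
  rintro ⟨i, hi, h⟩
  obtain rfl : i = Fin.last n := Fin.ext (Nat.succ.inj hi)
  refine ⟨fun j hj => ?_, fun j hj => absurd hj (Fin.le_last j).not_gt⟩
  rw [h, Fin.lt_last_iff_ne_last]
  exact fun hj' => hj.ne (σ.injective (hj'.trans h.symm))

variable {a b : ℕ} {α : Equiv.Perm (Fin a)} {β : Equiv.Perm (Fin b)}

theorem isStrongFixedPoint_directSumPerm_castAdd {i : Fin a} :
    IsStrongFixedPoint (α ⊕ₚ β) (Fin.castAdd b i) ↔ IsStrongFixedPoint α i := by
  simp only [IsStrongFixedPoint, Fin.forall_fin_add, directSumPerm_castAdd, directSumPerm_natAdd,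
    Fin.lt_def, Fin.val_castAdd, Fin.val_natAdd]
  grind

theorem isStrongFixedPoint_directSumPerm_natAdd {i : Fin b} :
    IsStrongFixedPoint (α ⊕ₚ β) (Fin.natAdd a i) ↔ IsStrongFixedPoint β i := by
  simp only [IsStrongFixedPoint, Fin.forall_fin_add, directSumPerm_castAdd, directSumPerm_natAdd,
    Fin.lt_def, Fin.val_castAdd, Fin.val_natAdd]
  grind

theorem isStrongFixedPoint_directSumPerm_one_last :
    IsStrongFixedPoint (α ⊕ₚ (1 : Equiv.Perm (Fin 1))) (Fin.last a) := by
  have hone : IsStrongFixedPoint (1 : Equiv.Perm (Fin 1)) 0 := by simp [IsStrongFixedPoint]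
  exact isStrongFixedPoint_directSumPerm_natAdd.2 hone

theorem IsStrongFixedPoint.exists_directSumPerm_one_eq {σ : Equiv.Perm (Fin (a + 1 + b))}
    (h : IsStrongFixedPoint σ (Fin.castAdd b (Fin.last a))) :
    ∃ α β, α ⊕ₚ (1 : Equiv.Perm (Fin 1)) ⊕ₚ β = σ := by
  have hfix : (σ (Fin.castAdd b (Fin.last a)) : ℕ) = a := congrArg Fin.val h.apply_eq
  have hlt (i : Fin a) : (σ (Fin.castAdd b (Fin.castAdd 1 i)) : ℕ) < a :=
    (Fin.lt_def.1 (h.1 _ i.castSucc_lt_last)).trans_eq hfix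
  obtain ⟨γ, β, rfl⟩ := exists_directSumPerm_eq σ <|
    Fin.lastCases (by omega) fun i => (hlt i).trans a.lt_succ_self
  obtain ⟨α, δ, rfl⟩ := exists_directSumPerm_eq γ fun i => by simpa using hlt i
  exact ⟨α, β, by rw [Subsingleton.elim δ 1]⟩

end StrongFixedPoint

section IsKing

variable {n a b : ℕ} {α : Equiv.Perm (Fin a)} {β : Equiv.Perm (Fin b)}

theorem isKing_iff {σ : Equiv.Perm (Fin n)} :
    IsKing σ ↔ ∀ i j : Fin n, (i : ℕ) + 1 = j →
      (σ i : ℕ) + 1 < σ j ∨ (σ j : ℕ) + 1 < σ i := by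
  have habs (x y : ℕ) : 1 < |(x : ℤ) - y| ↔ y + 1 < x ∨ x + 1 < y := by
    rw [lt_abs]
    omega
  simp only [IsKing, habs]
  exact ⟨fun h i j hij => by simpa only [hij] using h i (hij ▸ j.isLt), fun h i hi => h i _ rfl⟩

theorem isKing_directSumPerm :
    IsKing (α ⊕ₚ β) ↔ IsKing α ∧ IsKing β ∧ ¬(FixesLast α ∧ FixesFirst β) := by
  have hjunction : (∀ (i : Fin a) (j : Fin b), (i : ℕ) + 1 = a + j →
      (α i : ℕ) + 1 < a + β j ∨ a + (β j : ℕ) + 1 < α i) ↔ ¬(FixesLast α ∧ FixesFirst β) := by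
    constructor
    · rintro h ⟨⟨i, hi, hαi⟩, j, hj, hβj⟩
      have hij := h i j (by omega)
      rw [hαi, hβj] at hij
      omega
    · intro h i j hij
      by_contra hclose
      exact h ⟨⟨i, by omega, Fin.ext (by omega)⟩, j, by omega, Fin.ext (by omega)⟩
  have hreverse (j : Fin b) (i : Fin a) : a + ((j : ℕ) + 1) ≠ i := by omega
  simp only [← hjunction, isKing_iff, Fin.forall_fin_add, directSumPerm_castAdd,
    directSumPerm_natAdd, Fin.val_castAdd, Fin.val_natAdd, hreverse, false_imp_iff, implies_true,
    forall_and, add_assoc, add_lt_add_iff_left, add_right_inj]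
  tauto

theorem isKing_directSumPerm_one :
    IsKing (α ⊕ₚ (1 : Equiv.Perm (Fin 1)) ⊕ₚ β) ↔
      (IsKing α ∧ ¬FixesLast α) ∧ IsKing β ∧ ¬FixesFirst β := by
  have hone : IsKing (1 : Equiv.Perm (Fin 1)) := by simp [isKing_iff]
  have hfirst : FixesFirst (1 : Equiv.Perm (Fin 1)) := ⟨0, rfl, rfl⟩
  have hlast : FixesLast (α ⊕ₚ (1 : Equiv.Perm (Fin 1))) :=
    isStrongFixedPoint_last_iff.1 isStrongFixedPoint_directSumPerm_one_last
  simp only [isKing_directSumPerm, hone, hfirst, hlast, true_and, and_true]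

end IsKing

section StrongFixedPointCount

variable {n a b : ℕ}

open Classical in
theorem sfp_eq_card (σ : Equiv.Perm (Fin n)) : sfp σ = #{i | IsStrongFixedPoint σ i} := by
  rw [sfp, Nat.card_eq_fintype_card, Fintype.card_subtype]

theorem sfp_fin_zero (σ : Equiv.Perm (Fin 0)) : sfp σ = 0 := by
  simp [sfp]

open Classical in
/-- The number of strong fixed points of `σ` strictly to the right of position `i`. -/
noncomputable def sfpAfter (σ : Equiv.Perm (Fin n)) (i : Fin n) : ℕ :=
  #{j | IsStrongFixedPoint σ j ∧ i < j}

theorem sfpAfter_directSumPerm_one (α : Equiv.Perm (Fin a)) (β : Equiv.Perm (Fin b)) :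
    sfpAfter (α ⊕ₚ (1 : Equiv.Perm (Fin 1)) ⊕ₚ β) (Fin.castAdd b (Fin.last a)) = sfp β := by
  classical
  have hleft (j : Fin (a + 1)) : ¬Fin.castAdd b (Fin.last a) < Fin.castAdd b j :=
    (Fin.le_last j).not_gt
  have hright (j : Fin b) : Fin.castAdd b (Fin.last a) < Fin.natAdd (a + 1) j := by
    simp only [Fin.lt_def, Fin.val_castAdd, Fin.val_last, Fin.val_natAdd]
    omega
  simp only [sfpAfter, sfp_eq_card, card_filter, Fin.sum_univ_add, hleft, hright, and_false,
    if_false, sum_const_zero, zero_add, and_true, isStrongFixedPoint_directSumPerm_natAdd]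

theorem sfp_eq_sfpAfter_zero_add_one {σ : Equiv.Perm (Fin (n + 1))}
    (h : IsStrongFixedPoint σ 0) : sfp σ = sfpAfter σ 0 + 1 := by
  classical
  simp only [sfp_eq_card, sfpAfter, card_filter, Fin.sum_univ_succ, h, Fin.succ_pos, lt_irrefl,
    and_false, and_true, if_true, if_false, zero_add, add_comm]

theorem sfpAfter_last (σ : Equiv.Perm (Fin (n + 1))) : sfpAfter σ (Fin.last n) = 0 := by
  simp [sfpAfter, (Fin.le_last _).not_gt]

-- The exponents `#{j ∈ s | i < j}` run through `0, …, #s - 1`, so this is a geometric sum.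
theorem sub_one_mul_sum_pow_card_filter_lt {ι R : Type*} [LinearOrder ι] [CommRing R]
    (s : Finset ι) (u : R) : (u - 1) * ∑ i ∈ s, u ^ #{j ∈ s | i < j} = u ^ #s - 1 := by
  induction s using Finset.induction_on_min with
  | empty => simp
  | insert m s hm ih =>
    have hms : m ∉ s := fun h => lt_irrefl m (hm m h)
    have hmin : {j ∈ insert m s | m < j} = s := by
      rw [filter_insert, if_neg (lt_irrefl m), filter_true_of_mem hm]
    have hrest (i) (hi : i ∈ s) : {j ∈ insert m s | i < j} = {j ∈ s | i < j} := by
      rw [filter_insert, if_neg (hm i hi).not_gt]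
    rw [sum_insert hms, hmin, sum_congr rfl fun i hi => by rw [hrest i hi], mul_add, ih,
      card_insert_of_notMem hms]
    ring

open Classical in
theorem pow_sfp_sub_one {R : Type*} [CommRing R] (u : R) (σ : Equiv.Perm (Fin n)) :
    u ^ sfp σ - 1 = (u - 1) * ∑ i with IsStrongFixedPoint σ i, u ^ sfpAfter σ i := by
  simp only [sfp_eq_card, sfpAfter, ← sub_one_mul_sum_pow_card_filter_lt, filter_filter]

end StrongFixedPointCount

section Recurrences

open Classical in
/-- `Dₙ`, the number of king permutations of length `n` that do not end with their maximum. -/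
noncomputable def kingNotLastCount (n : ℕ) : ℕ :=
  #{σ : Equiv.Perm (Fin n) | IsKing σ ∧ ¬FixesLast σ}

open Classical in
theorem kingCount_eq_card (n : ℕ) : kingCount n = #{σ : Equiv.Perm (Fin n) | IsKing σ} := by
  rw [kingCount, Nat.card_eq_fintype_card, Fintype.card_subtype]

section CommSemiring

variable {R : Type*} [CommSemiring R] (u : R)

open Classical in
/-- The coefficient of `tⁿ` in `G(t, u)`, the distribution of strong fixed points over all king
permutations. -/
noncomputable def kingSum (n : ℕ) : R := ∑ σ : Equiv.Perm (Fin n) with IsKing σ, u ^ sfp σ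

open Classical in
/-- The coefficient of `tⁿ` in `B(t, u)`, the distribution of strong fixed points over king
permutations that do not begin with their minimum. -/
noncomputable def kingNotFirstSum (n : ℕ) : R :=
  ∑ σ : Equiv.Perm (Fin n) with IsKing σ ∧ ¬FixesFirst σ, u ^ sfp σ

theorem kingCount_zero : kingCount 0 = 1 := by
  simp [kingCount, isKing_iff]

theorem kingNotLastCount_zero : kingNotLastCount 0 = 1 := by
  simp [kingNotLastCount, isKing_iff, FixesLast]

theorem kingSum_zero : kingSum u 0 = 1 := by
  simp [kingSum, isKing_iff, sfp_fin_zero]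

theorem kingNotFirstSum_zero : kingNotFirstSum u 0 = 1 := by
  simp [kingNotFirstSum, isKing_iff, FixesFirst, sfp_fin_zero]

open Classical in
theorem sum_pow_sfpAfter_eq_mul {a b n : ℕ} (hn : a + 1 + b = n) (i : Fin n) (hi : (i : ℕ) = a) :
    ∑ σ : Equiv.Perm (Fin n) with IsKing σ ∧ IsStrongFixedPoint σ i, u ^ sfpAfter σ i =
      kingNotLastCount a * kingNotFirstSum u b := by
  subst hn
  obtain rfl : i = Fin.castAdd b (Fin.last a) := Fin.ext hi
  rw [kingNotLastCount, kingNotFirstSum, card_eq_sum_ones, Nat.cast_sum, sum_mul_sum,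
    ← sum_product']
  symm
  refine sum_nbij (fun p => p.1 ⊕ₚ (1 : Equiv.Perm (Fin 1)) ⊕ₚ p.2) ?_ ?_ ?_ ?_
  · rintro ⟨α, β⟩ h
    simpa [isKing_directSumPerm_one, isStrongFixedPoint_directSumPerm_castAdd,
      isStrongFixedPoint_directSumPerm_one_last] using h
  · rintro ⟨α, β⟩ - ⟨α', β'⟩ - h
    obtain ⟨hα, hβ⟩ := directSumPerm_injective2 h
    exact Prod.ext (directSumPerm_injective2 hα).1 hβ
  · intro σ hσ
    obtain ⟨hking, hfix⟩ : IsKing σ ∧ _ := by simpa using hσ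
    obtain ⟨α, β, rfl⟩ := hfix.exists_directSumPerm_one_eq
    exact ⟨(α, β), by simpa using isKing_directSumPerm_one.1 hking, rfl⟩
  · rintro ⟨α, β⟩ -
    simp only [Nat.cast_one, one_mul, sfpAfter_directSumPerm_one]

theorem kingSum_succ (n : ℕ) :
    kingSum u (n + 1) = kingNotFirstSum u (n + 1) + u * kingNotFirstSum u n := by
  classical
  have hfirst := sum_pow_sfpAfter_eq_mul u (show 0 + 1 + n = n + 1 by omega) 0 rfl
  rw [kingNotLastCount_zero, Nat.cast_one, one_mul] at hfirst
  rw [← hfirst, kingSum, kingNotFirstSum, ← sum_filter_not_add_sum_filter _ FixesFirst,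
    filter_filter, filter_filter, mul_sum]
  simp only [← isStrongFixedPoint_zero_iff]
  refine congrArg _ (sum_congr rfl fun σ hσ => ?_)
  rw [sfp_eq_sfpAfter_zero_add_one (mem_filter.1 hσ).2.2, pow_succ']

end CommSemiring

theorem kingCount_succ (n : ℕ) :
    kingCount (n + 1) = kingNotLastCount (n + 1) + kingNotLastCount n := by
  classical
  have hlast := sum_pow_sfpAfter_eq_mul 1 (show n + 1 + 0 = n + 1 by omega) (Fin.last n) rfl
  simp only [kingNotFirstSum_zero, one_pow, sum_const, smul_eq_mul, mul_one, Nat.cast_id] at hlast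
  rw [← hlast, kingCount_eq_card, kingNotLastCount, ← card_filter_add_card_filter_not FixesLast,
    add_comm]
  simp only [filter_filter, isStrongFixedPoint_last_iff]

theorem kingSum_succ_sub_kingCount {R : Type*} [CommRing R] (u : R) (n : ℕ) :
    kingSum u (n + 1) - kingCount (n + 1) =
      (u - 1) * ∑ p ∈ antidiagonal n, kingNotLastCount p.1 * kingNotFirstSum u p.2 := by
  classical
  calc kingSum u (n + 1) - kingCount (n + 1)
      = ∑ σ : Equiv.Perm (Fin (n + 1)) with IsKing σ, (u ^ sfp σ - 1) := by
        simp [kingSum, kingCount_eq_card]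
    _ = (u - 1) * ∑ i : Fin (n + 1), ∑ σ with IsKing σ ∧ IsStrongFixedPoint σ i,
          u ^ sfpAfter σ i := by
        simp only [pow_sfp_sub_one, ← mul_sum]
        rw [sum_comm' (t' := univ) (s' := fun i => {σ | IsKing σ ∧ IsStrongFixedPoint σ i})
          fun σ i => by simp]
    _ = (u - 1) * ∑ i : Fin (n + 1), kingNotLastCount i * kingNotFirstSum u (n - i) := by
        congr! 2 with i
        exact sum_pow_sfpAfter_eq_mul u (by omega) i rfl
    _ = (u - 1) * ∑ p ∈ antidiagonal n, kingNotLastCount p.1 * kingNotFirstSum u p.2 := by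
        rw [Nat.sum_antidiagonal_eq_sum_range_succ
          (fun k l => (kingNotLastCount k : R) * kingNotFirstSum u l), sum_range]

end Recurrences

section GeneratingFunctions

open PowerSeries

/-- The generating function `A(t)` of king permutations, with coefficients in `R`. -/
noncomputable def kingSeries (R : Type*) [CommSemiring R] : R⟦X⟧ := mk fun n => (kingCount n : R)

/-- The generating function `D(t)` of king permutations that do not end with their maximum. -/
noncomputable def kingNotLastSeries (R : Type*) [CommSemiring R] : R⟦X⟧ :=
  mk fun n => (kingNotLastCount n : R)

/-- The generating function `G(t, u)` of king permutations weighted by `u ^ sfp σ`. -/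
noncomputable def kingSfpSeries {R : Type*} [CommSemiring R] (u : R) : R⟦X⟧ := mk (kingSum u)

/-- The generating function `B(t, u)` of king permutations that do not begin with their minimum,
weighted by `u ^ sfp σ`. -/
noncomputable def kingNotFirstSeries {R : Type*} [CommSemiring R] (u : R) : R⟦X⟧ :=
  mk (kingNotFirstSum u)

section CommSemiring

variable {R : Type*} [CommSemiring R]

theorem mk_eq_one_add_C_mul_X_mul_mk {f g : ℕ → R} {c : R} (hzero : f 0 = g 0)
    (hsucc : ∀ n, f (n + 1) = g (n + 1) + c * g n) : mk f = (1 + C c * X) * mk g := by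
  ext n
  cases n with
  | zero => simp [add_mul, mul_assoc, hzero]
  | succ n => simp [add_mul, mul_assoc, coeff_succ_X_mul, hsucc]

theorem kingSeries_eq_one_add_X_mul : kingSeries R = (1 + X) * kingNotLastSeries R := by
  rw [kingSeries, kingNotLastSeries, ← one_mul X, ← map_one C]
  exact mk_eq_one_add_C_mul_X_mul_mk (by rw [kingCount_zero, kingNotLastCount_zero])
    fun n => by rw [kingCount_succ, Nat.cast_add, one_mul]

theorem kingSfpSeries_eq_one_add_C_mul_X_mul (u : R) :
    kingSfpSeries u = (1 + C u * X) * kingNotFirstSeries u :=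
  mk_eq_one_add_C_mul_X_mul_mk (by rw [kingSum_zero, kingNotFirstSum_zero]) (kingSum_succ u)

end CommSemiring

theorem kingSfpSeries_sub_kingSeries {R : Type*} [CommRing R] (u : R) :
    kingSfpSeries u - kingSeries R =
      C (u - 1) * (X * (kingNotLastSeries R * kingNotFirstSeries u)) := by
  ext n
  cases n with
  | zero => simp [kingSfpSeries, kingSeries, kingSum_zero, kingCount_zero]
  | succ n =>
    rw [map_sub, coeff_C_mul, coeff_succ_X_mul, coeff_mul]
    simp only [kingSfpSeries, kingSeries, kingNotLastSeries, kingNotFirstSeries, coeff_mk]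
    exact kingSum_succ_sub_kingCount u n

theorem statement_5_general {R : Type*} [CommRing R] (u : R) :
    (1 + X * (1 + C u + C u * X) + X * (1 - C u) * kingSeries R) * kingNotFirstSeries u =
      (1 + X) * kingSeries R := by
  have hA := kingSeries_eq_one_add_X_mul (R := R)
  have hG := kingSfpSeries_eq_one_add_C_mul_X_mul u
  have hGA := kingSfpSeries_sub_kingSeries u
  rw [map_sub, map_one] at hGA
  linear_combination (1 + X) * hGA - (1 + X) * hG + X * (1 - C u) * kingNotFirstSeries u * hA

end GeneratingFunctions

theorem statement_5 :
    (1 + PowerSeries.X * (1 + U + U * PowerSeries.X)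
        + PowerSeries.X * (1 - U) * kingAu) * Btu
      = (1 + PowerSeries.X) * kingAu := by
  have hB : Btu = kingNotFirstSeries (Polynomial.X : Polynomial ℚ) := by
    classical
    ext1 n
    simp only [Btu, kingNotFirstSeries, kingNotFirstSum, fixesFirst_iff, PowerSeries.coeff_mk,
      sum_filter, not_exists, ne_eq]
  rw [hB]
  exact statement_5_general (Polynomial.X : Polynomial ℚ)
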